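/- Let u, v, w, y ∈ ℝ⁷ be orthonormal and let V = span_ℝ{u,v,w,y}. Then |(∗φ)(u,v,w,y)| = 1 (i.e. V is, up to orientation, calibrated by ∗φ) if and only if φ(a,b,c) = 0 for all a, b, c ∈ V. -/

import Mathlib

/-!
STATEMENT 0: For linearly independent u, v, w ∈ ℝ⁷, the subspace
V = span{u,v,w} is closed under the G₂ cross product iff the 1-form
x ↦ (∗φ)(u,v,w,x) vanishes identically.
-/

noncomputable section

/-- ℝ⁷ with coordinates (x₀,x₁,x₂,x₃,y₁,y₂,y₃) indexed 0,…,6. -/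
abbrev V7 := Fin 7 → ℝ

/-- Standard basis vector. -/
def e7 (k : Fin 7) : V7 := fun j => if j = k then 1 else 0

/-- The wedge of three coordinate 1-forms, `(e^p ∧ e^q ∧ e^r)(a,b,c)`. -/
def form3 (p q r : Fin 7) (a b c : V7) : ℝ :=
  Matrix.det !![a p, a q, a r; b p, b q, b r; c p, c q, c r]

/-- The standard G₂ 3-form φ = f¹∧f²∧f³ + f¹∧(e⁰∧e¹ − e²∧e³)
    + f²∧(e⁰∧e² − e³∧e¹) + f³∧(e⁰∧e³ − e¹∧e²), with e⁰,e¹,e²,e³,f¹,f²,f³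
    the coordinate 1-forms indexed 0,1,2,3,4,5,6. -/
def phi7 (a b c : V7) : ℝ :=
  form3 4 5 6 a b c
    + (form3 4 0 1 a b c - form3 4 2 3 a b c)
    + (form3 5 0 2 a b c - form3 5 3 1 a b c)
    + (form3 6 0 3 a b c - form3 6 1 2 a b c)

/-- The wedge of four coordinate 1-forms. -/
def form4 (p q r s : Fin 7) (a b c d : V7) : ℝ :=
  Matrix.det !![a p, a q, a r, a s; b p, b q, b r, b s;
                c p, c q, c r, c s; d p, d q, d r, d s]

/-- The dual 4-form ∗φ = e⁰∧e¹∧e²∧e³ − f²∧f³∧(e⁰∧e¹ − e²∧e³)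
    − f³∧f¹∧(e⁰∧e² − e³∧e¹) − f¹∧f²∧(e⁰∧e³ − e¹∧e²). -/
def starphi7 (a b c d : V7) : ℝ :=
  form4 0 1 2 3 a b c d
    - (form4 5 6 0 1 a b c d - form4 5 6 2 3 a b c d)
    - (form4 6 4 0 2 a b c d - form4 6 4 3 1 a b c d)
    - (form4 4 5 0 3 a b c d - form4 4 5 1 2 a b c d)

/-- The cross product, characterized by ⟨u × v, z⟩ = φ(u,v,z) for the
    standard inner product; its k-th coordinate is φ(u,v,e_k). -/
def cross7 (a b : V7) : V7 := fun k => phi7 a b (e7 k)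

/-- The standard inner product on ℝ⁷. -/
def dot7 (a b : V7) : ℝ := ∑ k, a k * b k

def cr (a b : V7) : V7 := ![
  a 1*b 4-a 4*b 1 + (a 2*b 5-a 5*b 2) + (a 3*b 6-a 6*b 3),
  -(a 0*b 4-a 4*b 0) - (a 2*b 6-a 6*b 2) + (a 3*b 5-a 5*b 3),
  -(a 0*b 5-a 5*b 0) + (a 1*b 6-a 6*b 1) - (a 3*b 4-a 4*b 3),
  -(a 0*b 6-a 6*b 0) - (a 1*b 5-a 5*b 1) + (a 2*b 4-a 4*b 2),
  a 0*b 1-a 1*b 0 - (a 2*b 3-a 3*b 2) + (a 5*b 6-a 6*b 5),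
  a 0*b 2-a 2*b 0 + (a 1*b 3-a 3*b 1) - (a 4*b 6-a 6*b 4),
  a 0*b 3-a 3*b 0 - (a 1*b 2-a 2*b 1) + (a 4*b 5-a 5*b 4)]

theorem cr0 (a b : V7) : cr a b 0 = a 1*b 4-a 4*b 1 + (a 2*b 5-a 5*b 2) + (a 3*b 6-a 6*b 3) := rfl
theorem cr1 (a b : V7) : cr a b 1 = -(a 0*b 4-a 4*b 0) - (a 2*b 6-a 6*b 2) + (a 3*b 5-a 5*b 3) := rfl
theorem cr2 (a b : V7) : cr a b 2 = -(a 0*b 5-a 5*b 0) + (a 1*b 6-a 6*b 1) - (a 3*b 4-a 4*b 3) := rfl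
theorem cr3 (a b : V7) : cr a b 3 = -(a 0*b 6-a 6*b 0) - (a 1*b 5-a 5*b 1) + (a 2*b 4-a 4*b 2) := rfl
theorem cr4 (a b : V7) : cr a b 4 = a 0*b 1-a 1*b 0 - (a 2*b 3-a 3*b 2) + (a 5*b 6-a 6*b 5) := rfl
theorem cr5 (a b : V7) : cr a b 5 = a 0*b 2-a 2*b 0 + (a 1*b 3-a 3*b 1) - (a 4*b 6-a 6*b 4) := rfl
theorem cr6 (a b : V7) : cr a b 6 = a 0*b 3-a 3*b 0 - (a 1*b 2-a 2*b 1) + (a 4*b 5-a 5*b 4) := rfl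

theorem dot_eq (a b : V7) : dot7 a b = a 0*b 0+a 1*b 1+a 2*b 2+a 3*b 3+a 4*b 4+a 5*b 5+a 6*b 6 := by
  simp [dot7, Fin.sum_univ_succ]; ring

theorem dot_comm (a b : V7) : dot7 a b = dot7 b a := by
  rw [dot_eq, dot_eq]; ring

theorem phi_eq (a b c : V7) : phi7 a b c = dot7 (cr a b) c := by
  simp only [phi7, form3, Matrix.det_fin_three, dot_eq, cr0, cr1, cr2, cr3, cr4, cr5, cr6]
  simp
  ring

theorem phi_cyc (a b c : V7) : phi7 a b c = phi7 b c a := by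
  simp only [phi_eq, dot_eq, cr0, cr1, cr2, cr3, cr4, cr5, cr6]
  ring

theorem phi_swap (a b c : V7) : phi7 a b c = - phi7 b a c := by
  simp only [phi_eq, dot_eq, cr0, cr1, cr2, cr3, cr4, cr5, cr6]
  ring

theorem phi_self (a c : V7) : phi7 a a c = 0 := by
  simp only [phi_eq, dot_eq, cr0, cr1, cr2, cr3, cr4, cr5, cr6]
  ring

theorem form4_eq (p q r s : Fin 7) (a b c d : V7) : form4 p q r s a b c d =
    (a p*b q-a q*b p)*(c r*d s-c s*d r) - (a p*b r-a r*b p)*(c q*d s-c s*d q)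
    + (a p*b s-a s*b p)*(c q*d r-c r*d q) + (a q*b r-a r*b q)*(c p*d s-c s*d p)
    - (a q*b s-a s*b q)*(c p*d r-c r*d p) + (a r*b s-a s*b r)*(c p*d q-c q*d p) := by
  simp [form4, Matrix.det_succ_row_zero, Fin.sum_univ_succ, Fin.succAbove, Fin.ext_iff, Matrix.submatrix]
  ring

theorem form4_cyc (p q r s : Fin 7) (a b c d : V7) :
    form4 p q r s b c d a = - form4 p q r s a b c d := by
  rw [form4_eq, form4_eq]; ring

theorem sp_cyc (a b c d : V7) : starphi7 b c d a = - starphi7 a b c d := by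
  simp only [starphi7, form4_cyc _ _ _ _ a b c d]; ring

theorem sp_eq (u v w y : V7) : starphi7 u v w y =
    dot7 y (cr u (cr v w)) + dot7 u v * dot7 w y - dot7 u w * dot7 v y := by
  simp only [starphi7, form4_eq, dot_eq, cr0, cr1, cr2, cr3, cr4, cr5, cr6]
  ring

theorem cr_norm (a b : V7) : dot7 (cr a b) (cr a b) = dot7 a a * dot7 b b - dot7 a b ^ 2 := by
  simp only [dot_eq, cr0, cr1, cr2, cr3, cr4, cr5, cr6]
  ring

theorem cr4fold (u v w y : V7) (k : Fin 7) : cr u (cr v (cr w y)) k =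
    - dot7 u v * cr w y k + dot7 u w * cr v y k - dot7 u y * cr v w k - dot7 v w * cr u y k
    + dot7 v y * cr u w k + dot7 (cr u w) y * v k - dot7 (cr u v) y * w k + dot7 (cr u v) w * y k := by
  fin_cases k <;> simp only [Fin.zero_eta, Fin.mk_one, Fin.reduceFinMk, dot_eq, cr0, cr1, cr2, cr3, cr4, cr5, cr6] <;> ring

theorem dot_nonneg (a : V7) : 0 ≤ dot7 a a := by
  rw [dot_eq]; nlinarith [mul_self_nonneg (a 0), mul_self_nonneg (a 1), mul_self_nonneg (a 2), mul_self_nonneg (a 3), mul_self_nonneg (a 4), mul_self_nonneg (a 5), mul_self_nonneg (a 6)]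

/-- the key quadratic identity -/
theorem key (u v w y : V7) (huu : dot7 u u = 1) (hvv : dot7 v v = 1) (hww : dot7 w w = 1)
    (hyy : dot7 y y = 1) (huv : dot7 u v = 0) (huw : dot7 u w = 0) (huy : dot7 u y = 0)
    (hvw : dot7 v w = 0) (hvy : dot7 v y = 0) (hwy : dot7 w y = 0) :
    dot7 (cr u (cr v (cr w y))) (cr u (cr v (cr w y)))
      = 1 - phi7 v w y ^ 2 - starphi7 u v w y ^ 2 := by
  have h1 := cr_norm w y
  have h2 := cr_norm v (cr w y)
  have h3 := cr_norm u (cr v (cr w y))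
  have h4 := sp_eq v w y u
  have h5 := sp_cyc u v w y
  have h6 := phi_eq w y v
  have h7 := phi_cyc v w y
  rw [hww, hyy, hwy] at h1
  rw [h1, hvv, dot_comm v (cr w y), ← h6, ← h7] at h2
  rw [hvw, hvy, h5] at h4
  rw [huu, h2, show dot7 u (cr v (cr w y)) = - starphi7 u v w y by linarith] at h3
  rw [h3]; ring

theorem phi_zero_of (u v w y : V7) (huu : dot7 u u = 1) (hvv : dot7 v v = 1) (hww : dot7 w w = 1)
    (hyy : dot7 y y = 1) (huv : dot7 u v = 0) (huw : dot7 u w = 0) (huy : dot7 u y = 0)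
    (hvw : dot7 v w = 0) (hvy : dot7 v y = 0) (hwy : dot7 w y = 0)
    (h : starphi7 u v w y ^ 2 = 1) : phi7 v w y = 0 := by
  have k := key u v w y huu hvv hww hyy huv huw huy hvw hvy hwy
  have := dot_nonneg (cr u (cr v (cr w y)))
  have : phi7 v w y ^ 2 = 0 := le_antisymm (by linarith) (sq_nonneg _)
  exact pow_eq_zero_iff two_ne_zero |>.mp this

theorem phi_span (S : Set V7) (b c : V7) (h : ∀ x ∈ S, phi7 x b c = 0) :
    ∀ a ∈ Submodule.span ℝ S, phi7 a b c = 0 := by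
  intro a ha
  induction ha using Submodule.span_induction with
  | mem x hx => exact h x hx
  | zero => simp [phi_eq, dot_eq, cr0, cr1, cr2, cr3, cr4, cr5, cr6]
  | add x y _ _ hx hy =>
    have : phi7 (x + y) b c = phi7 x b c + phi7 y b c := by
      simp only [phi_eq, dot_eq, cr0, cr1, cr2, cr3, cr4, cr5, cr6, Pi.add_apply]; ring
    rw [this, hx, hy, add_zero]
  | smul r x _ hx =>
    have : phi7 (r • x) b c = r * phi7 x b c := by
      simp only [phi_eq, dot_eq, cr0, cr1, cr2, cr3, cr4, cr5, cr6, Pi.smul_apply, smul_eq_mul]; ring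
    rw [this, hx, mul_zero]

theorem phi_span3 (S : Set V7) (h : ∀ a ∈ S, ∀ b ∈ S, ∀ c ∈ S, phi7 a b c = 0) :
    ∀ a ∈ Submodule.span ℝ S, ∀ b ∈ Submodule.span ℝ S, ∀ c ∈ Submodule.span ℝ S,
      phi7 a b c = 0 := by
  intro a ha b hb c hc
  refine phi_span S b c (fun a ha => ?_) a ha
  rw [phi_cyc]
  refine phi_span S c a (fun b hb => ?_) b hb
  rw [phi_cyc]
  refine phi_span S a b (fun c hc => ?_) c hc
  exact h c hc a ha b hb

/-- for orthonormal u,v,w,y spanning V, |(∗φ)(u,v,w,y)| = 1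
    (V is calibrated by ∗φ up to orientation) iff φ vanishes on V. -/
theorem stmt7 (u v w y : V7)
    (horth : ∀ i j : Fin 4,
      dot7 (![u, v, w, y] i) (![u, v, w, y] j) = if i = j then 1 else 0) :
    |starphi7 u v w y| = 1
      ↔ (∀ a ∈ Submodule.span ℝ ({u, v, w, y} : Set V7),
          ∀ b ∈ Submodule.span ℝ ({u, v, w, y} : Set V7),
            ∀ c ∈ Submodule.span ℝ ({u, v, w, y} : Set V7),
              phi7 a b c = 0) := by
  have huu : dot7 u u = 1 := by simpa using horth 0 0
  have hvv : dot7 v v = 1 := by simpa using horth 1 1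
  have hww : dot7 w w = 1 := by simpa using horth 2 2
  have hyy : dot7 y y = 1 := by simpa using horth 3 3
  have huv : dot7 u v = 0 := by simpa using horth 0 1
  have huw : dot7 u w = 0 := by simpa using horth 0 2
  have huy : dot7 u y = 0 := by simpa using horth 0 3
  have hvw : dot7 v w = 0 := by simpa using horth 1 2
  have hvy : dot7 v y = 0 := by simpa using horth 1 3
  have hwy : dot7 w y = 0 := by simpa using horth 2 3
  have hvu := (dot_comm v u).trans huv
  have hwu := (dot_comm w u).trans huw
  have hyu := (dot_comm y u).trans huy
  have hwv := (dot_comm w v).trans hvw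
  have hyv := (dot_comm y v).trans hvy
  have hyw := (dot_comm y w).trans hwy
  constructor
  · intro h
    have h0 : starphi7 u v w y ^ 2 = 1 := by rw [← sq_abs, h, one_pow]
    have h1 : starphi7 v w y u ^ 2 = 1 := by rw [sp_cyc, neg_sq, h0]
    have h2 : starphi7 w y u v ^ 2 = 1 := by rw [sp_cyc, neg_sq, h1]
    have h3 : starphi7 y u v w ^ 2 = 1 := by rw [sp_cyc, neg_sq, h2]
    have p0 := phi_zero_of u v w y huu hvv hww hyy huv huw huy hvw hvy hwy h0
    have p1 := phi_zero_of v w y u hvv hww hyy huu hvw hvy hvu hwy hwu hyu h1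
    have p2 := phi_zero_of w y u v hww hyy huu hvv hwy hwu hwv hyu hyv huv h2
    have p3 := phi_zero_of y u v w hyy huu hvv hww hyu hyv hyw huv huw hvw h3
    have all : ∀ a b c, phi7 a b c = 0 → phi7 b c a = 0 ∧ phi7 c a b = 0 ∧ phi7 b a c = 0
        ∧ phi7 a c b = 0 ∧ phi7 c b a = 0 := by
      intro a b c h
      have e1 := phi_cyc a b c
      have e2 := phi_cyc b c a
      have e3 := phi_swap a b c
      have e4 := phi_cyc b a c
      have e5 := phi_cyc a c b
      refine ⟨?_, ?_, ?_, ?_, ?_⟩ <;> linarith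
    have s2 : ∀ a c, phi7 a c a = 0 := fun a c => by rw [phi_cyc, phi_cyc, phi_self]
    have s3 : ∀ a c, phi7 c a a = 0 := fun a c => by rw [phi_cyc, phi_self]
    have q0 := all _ _ _ p0
    have q1 := all _ _ _ p1
    have q2 := all _ _ _ p2
    have q3 := all _ _ _ p3
    apply phi_span3
    simp only [Set.mem_insert_iff, Set.mem_singleton_iff]
    rintro a (rfl | rfl | rfl | rfl) b (rfl | rfl | rfl | rfl) c (rfl | rfl | rfl | rfl) <;>
      simp only [phi_self, s2, s3, p0, p1, p2, p3, q0, q1, q2, q3]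
  · intro h
    have mu : u ∈ Submodule.span ℝ ({u, v, w, y} : Set V7) := Submodule.subset_span (by simp)
    have mv : v ∈ Submodule.span ℝ ({u, v, w, y} : Set V7) := Submodule.subset_span (by simp)
    have mw : w ∈ Submodule.span ℝ ({u, v, w, y} : Set V7) := Submodule.subset_span (by simp)
    have my : y ∈ Submodule.span ℝ ({u, v, w, y} : Set V7) := Submodule.subset_span (by simp)
    have k := key u v w y huu hvv hww hyy huv huw huy hvw hvy hwy
    have z : cr u (cr v (cr w y)) = 0 := by
      funext j
      rw [cr4fold, ← phi_eq, ← phi_eq, ← phi_eq, h u mu w mw y my, h u mu v mv y my,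
        h u mu v mv w mw, huv, huw, huy, hvw, hvy]
      simp
    rw [z, h v mv w mw y my] at k
    have k0 : dot7 0 0 = 0 := by simp [dot_eq]
    rw [k0] at k
    rw [← sq_eq_sq₀ (abs_nonneg _) zero_le_one, sq_abs]
    linarith
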